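/- For every n=(n₁,n₂,n₃)∈ℤ³ with all nᵢ≥1, the polynomial space V_n spanned by the restrictions to a triangle △ of G of the box spline translates active on △ has dimension dim V_n = n₁n₂ + n₁n₃ + n₂n₃. -/

import Mathlib

/- ## The three-directional (type-I) grid -/

noncomputable section

open MvPolynomial Set Function

/-- Points of the plane. -/
abbrev Pt := ℝ × ℝ

/-- Bivariate real polynomials `ℝ[x,y]`. -/
abbrev BPoly := MvPolynomial (Fin 2) ℝ

/-- Evaluation of a bivariate polynomial at a point of the plane. -/
def evalP (q : BPoly) (p : Pt) : ℝ := MvPolynomial.eval ![p.1, p.2] q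

/-- Triangles of the three-directional grid `G`:  `⟨v, false⟩` is the "lower"
triangle with vertices `v, v+(1,0), v+(1,1)`, and `⟨v, true⟩` is the "upper"
triangle with vertices `v, v+(0,1), v+(1,1)`. -/
structure Tri where
  v : ℤ × ℤ
  up : Bool
deriving DecidableEq

namespace Tri

/-- The open triangle in the plane realizing a combinatorial triangle. -/
def toSet (T : Tri) : Set Pt :=
  if T.up then
    {p | (T.v.1 : ℝ) < p.1 ∧ p.1 - (T.v.1 : ℝ) < p.2 - (T.v.2 : ℝ) ∧ p.2 < (T.v.2 : ℝ) + 1}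
  else
    {p | (T.v.2 : ℝ) < p.2 ∧ p.2 - (T.v.2 : ℝ) < p.1 - (T.v.1 : ℝ) ∧ p.1 < (T.v.1 : ℝ) + 1}

/-- The closed triangle. -/
def cl (T : Tri) : Set Pt := closure T.toSet

/-- The three lattice vertices of a triangle. -/
def vertices (T : Tri) : Finset (ℤ × ℤ) :=
  if T.up then {T.v, (T.v.1, T.v.2 + 1), (T.v.1 + 1, T.v.2 + 1)}
  else {T.v, (T.v.1 + 1, T.v.2), (T.v.1 + 1, T.v.2 + 1)}

end Tri

/-- Edges of the grid: a lattice point together with a direction type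
(`0 ↦ e₁ = (1,0)`, `1 ↦ e₂ = (0,1)`, `2 ↦ e₃ = (1,1)`); the edge of type `i`
at `v` joins `v` to `v + eᵢ`. -/
abbrev Edge := (ℤ × ℤ) × Fin 3

/-- The three direction vectors `e₁, e₂, e₃`. -/
def dirZ : Fin 3 → ℤ × ℤ := ![(1, 0), (0, 1), (1, 1)]

/-- The three edges of a triangle. -/
def Tri.edges (T : Tri) : Finset Edge :=
  if T.up then {((T.v.1, T.v.2 + 1), 0), (T.v, 1), (T.v, 2)}
  else {(T.v, 0), ((T.v.1 + 1, T.v.2), 1), (T.v, 2)}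

/-- The open segment realizing an edge. -/
def Edge.seg (ε : Edge) : Set Pt :=
  {p | ∃ t : ℝ, 0 < t ∧ t < 1 ∧
    p = ((ε.1.1 : ℝ) + t * ((dirZ ε.2).1 : ℝ), (ε.1.2 : ℝ) + t * ((dirZ ε.2).2 : ℝ))}

/-- `M*`: the union of the closed triangles of a multicell domain. -/
def Mstar (M : Finset Tri) : Set Pt := ⋃ T ∈ M, T.cl

/-- `ℙ(M,V)`: continuous functions on `M*` whose restriction to each triangle
of `M` is the restriction of a polynomial in `V`. -/
def PP (M : Finset Tri) (V : Set BPoly) : Set (Pt → ℝ) :=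
  {f | ContinuousOn f (Mstar M) ∧ ∀ T ∈ M, ∃ q ∈ V, EqOn f (evalP q) T.toSet}

/-- The diamond of an edge: union of the closed triangles of `M` having `ε`
as an edge. -/
def diamond (M : Finset Tri) (ε : Edge) : Set Pt :=
  ⋃ T ∈ M.filter (fun T => ε ∈ T.edges), T.cl

/-- The spline space with edge smoothness `d` on the multicell domain `M`:
piecewise polynomials (pieces from `V`) which are `C^{dᵢ}` on the diamond of
every edge of type `i` of `M`. -/
def SplineSpace (M : Finset Tri) (V : Set BPoly) (d : Fin 3 → ℕ) : Set (Pt → ℝ) :=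
  {f | f ∈ PP M V ∧
    ∀ ε : Edge, (∃ T ∈ M, ε ∈ T.edges) → ContDiffOn ℝ (d ε.2) f (diamond M ε)}

/-- Directional derivative of a polynomial along an integer vector. -/
def dirD (e : ℤ × ℤ) (q : BPoly) : BPoly :=
  (e.1 : ℝ) • MvPolynomial.pderiv (0 : Fin 2) q + (e.2 : ℝ) • MvPolynomial.pderiv (1 : Fin 2) q

/-- The mixed directional derivative operator
`D_s = (∂_{e₁})^{s₁} (∂_{e₂})^{s₂} (∂_{e₃})^{s₃}`. -/
def Dmix (s : Fin 3 → ℕ) (q : BPoly) : BPoly :=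
  (dirD (dirZ 0))^[s 0] ((dirD (dirZ 1))^[s 1] ((dirD (dirZ 2))^[s 2] q))

/-- The index sets `Iᵢ^d`; `I₁^d = {s | s₂+s₃ ≤ d₁}` and cyclically. -/
def Iset (d : Fin 3 → ℕ) (i : Fin 3) : Set (Fin 3 → ℕ) :=
  {s | s (i + 1) + s (i + 2) ≤ d i}

/-- Two triangles of the grid are adjacent if they are distinct and share an edge. -/
def Adj (T T' : Tri) : Prop := T ≠ T' ∧ ∃ ε : Edge, ε ∈ T.edges ∧ ε ∈ T'.edges

/-- `c` is an edge-connected chain of length `m` from `T` to `T'`. -/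
def TriIsChain (T T' : Tri) (m : ℕ) (c : ℕ → Tri) : Prop :=
  c 0 = T ∧ c m = T' ∧ ∀ k < m, Adj (c k) (c (k + 1))

/-- The set of types of the edges crossed by a chain. -/
def chainTypes (m : ℕ) (c : ℕ → Tri) : Set (Fin 3) :=
  {i | ∃ k < m, ∃ ε : Edge, ε.2 = i ∧ ε ∈ (c k).edges ∧ ε ∈ (c (k + 1)).edges}

/-- Minimal length of an edge-connected chain between two triangles. -/
def minLen (T T' : Tri) : ℕ := sInf {m | ∃ c, TriIsChain T T' m c}

/-- The smoothness type `SmType(△,△')`: the types of the edges crossed by a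
shortest edge-connected chain from `△` to `△'`. -/
def SmType (T T' : Tri) : Set (Fin 3) :=
  {i | ∃ c, TriIsChain T T' (minLen T T') c ∧ i ∈ chainTypes (minLen T T') c}

/-- `q` is the polynomial piece of `f` on the triangle `T`. -/
def IsPiece (f : Pt → ℝ) (T : Tri) (q : BPoly) : Prop := EqOn f (evalP q) T.toSet

/-- The strongly regular spline space `Ŝ^d(M,V)`: piecewise polynomials such
that for any two triangles of `M` with intersecting closures, the derivatives
`D_s`, `s ∈ ⋂_{i ∈ SmType(△,△')} Iᵢ^d`, of the two polynomial pieces agree on the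
intersection of the closures (i.e. `D_s f` is continuous there). -/
def StrongSpline (M : Finset Tri) (V : Set BPoly) (d : Fin 3 → ℕ) : Set (Pt → ℝ) :=
  {f | f ∈ PP M V ∧
    ∀ T ∈ M, ∀ T' ∈ M, (T.cl ∩ T'.cl).Nonempty →
      ∀ s : Fin 3 → ℕ, (∀ i ∈ SmType T T', s ∈ Iset d i) →
        ∀ q q' : BPoly, IsPiece f T q → IsPiece f T' q' →
          ∀ x ∈ T.cl ∩ T'.cl, evalP (Dmix s q) x = evalP (Dmix s q') x}

/-- Kissing triangles: the closures intersect in exactly one point. -/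
def Kissing (T T' : Tri) : Prop := ∃ p : Pt, T.cl ∩ T'.cl = {p}

/-- An over-concave vertex of `M`: exactly one triangle of `star(ν)` is
missing from `M`. -/
def OverConcave (M : Finset Tri) (ν : ℤ × ℤ) : Prop :=
  ∃! T : Tri, ν ∈ T.vertices ∧ T ∉ M

/- ## Type-I box splines -/

/-- The Courant hat function `B_{(1,1,1)}`: the piecewise linear function on
`G` supported on `star((1,1))` with value `1` at `(1,1)` and `0` at all other
lattice points. -/
def hat (p : Pt) : ℝ :=
  max 0 (min (min (min p.1 p.2) (min (2 - p.1) (2 - p.2)))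
             (min (1 - (p.1 - p.2)) (1 + (p.1 - p.2))))

/-- The type-I box spline `B_{(n₁,n₂,n₃)}`, defined by repeated directional
convolution starting from the Courant hat function (the result is independent
of the order of the convolutions); junk value `0` if some `nᵢ = 0`. -/
noncomputable def boxN : ℕ → ℕ → ℕ → Pt → ℝ
  | 0, _, _, _ => 0
  | _ + 1, 0, _, _ => 0
  | _ + 1, _ + 1, 0, _ => 0
  | 1, 1, 1, p => hat p
  | a + 2, b + 1, c + 1, p =>
      ∫ t in (0:ℝ)..1, boxN (a + 1) (b + 1) (c + 1) (p.1 - t, p.2)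
  | 1, b + 2, c + 1, p =>
      ∫ t in (0:ℝ)..1, boxN 1 (b + 1) (c + 1) (p.1, p.2 - t)
  | 1, 1, c + 2, p =>
      ∫ t in (0:ℝ)..1, boxN 1 1 (c + 1) (p.1 - t, p.2 - t)
  termination_by a b c _ => a + b + c
  decreasing_by all_goals omega

/-- The translate `B_n(· - w)` of the box spline. -/
def trBox (n₁ n₂ n₃ : ℕ) (w : ℤ × ℤ) (p : Pt) : ℝ :=
  boxN n₁ n₂ n₃ (p.1 - (w.1 : ℝ), p.2 - (w.2 : ℝ))

/-- `Supp_n(△̂)`: lattice translates of `B_n` that do not vanish identically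
on the triangle `T`. -/
def activeSet (n₁ n₂ n₃ : ℕ) (T : Tri) : Set (ℤ × ℤ) :=
  {w | ¬ ∀ p ∈ T.toSet, trBox n₁ n₂ n₃ w p = 0}

/-- `c` is the coefficient vector of the polynomial `q` with respect to the
active box-spline translates on `T`:  `q|_T = Σ_β λ_T^β(q)·β|_T`. -/
def Represents (n₁ n₂ n₃ : ℕ) (T : Tri) (q : BPoly) (c : (ℤ × ℤ) →₀ ℝ) : Prop :=
  ↑c.support ⊆ activeSet n₁ n₂ n₃ T ∧
    ∀ p ∈ T.toSet, evalP q p = c.sum fun w a => a * trBox n₁ n₂ n₃ w p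

/-- `V_n` (relative to the triangle `T`): polynomials whose restriction to `T`
is a linear combination of the active box-spline translates on `T`. -/
def VSpace (n₁ n₂ n₃ : ℕ) (T : Tri) : Set BPoly :=
  {q | ∃ c, Represents n₁ n₂ n₃ T q c}


set_option linter.unusedTactic false
set_option linter.unreachableTactic false
set_option linter.unusedSimpArgs false

/-- translate of a point by an integer vector -/
def ad (p : Pt) (u : ℤ × ℤ) : Pt := (p.1 + (u.1 : ℝ), p.2 + (u.2 : ℝ))

/-- move of a point along an integer vector -/
def mv (p : Pt) (t : ℝ) (e : ℤ × ℤ) : Pt := (p.1 + t * (e.1 : ℝ), p.2 + t * (e.2 : ℝ))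

/-- directional convolution -/
def cv (e : ℤ × ℤ) (f : Pt → ℝ) (p : Pt) : ℝ :=
  ∫ t in (0:ℝ)..1, f (mv p (-t) e)

lemma mv_cont (e : ℤ × ℤ) : Continuous (fun z : Pt × ℝ => mv z.1 (-z.2) e) := by
  unfold mv; fun_prop

lemma mv_cont' (p : Pt) (e : ℤ × ℤ) : Continuous (fun t : ℝ => mv p t e) := by
  unfold mv; fun_prop

lemma cv_cont (e : ℤ × ℤ) (f : Pt → ℝ) (hf : Continuous f) : Continuous (cv e f) := by
  unfold cv
  refine intervalIntegral.continuous_parametric_intervalIntegral_of_continuous' ?_ 0 1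
  exact hf.comp (mv_cont e)

lemma cv_mv (e : ℤ × ℤ) (f : Pt → ℝ) (p : Pt) (s : ℝ) :
    cv e f (mv p s e) = ∫ t in (s-1)..s, f (mv p t e) := by
  have h := intervalIntegral.integral_comp_sub_left (a := 0) (b := 1) (fun t => f (mv p t e)) s
  rw [sub_zero] at h
  rw [← h]
  unfold cv
  congr 1
  ext t
  congr 1
  simp only [mv, Prod.mk.injEq]
  constructor <;> ring

lemma cv_deriv (e : ℤ × ℤ) (f : Pt → ℝ) (hf : Continuous f) (p : Pt) :
    HasDerivAt (fun s => cv e f (mv p s e)) (f p - f (mv p (-1) e)) 0 := by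
  have hc : Continuous (fun t => f (mv p t e)) := hf.comp (mv_cont' p e)
  have h0 : ∀ s : ℝ, HasDerivAt (fun s => ∫ t in (0:ℝ)..s, f (mv p t e)) (f (mv p s e)) s :=
    fun s => intervalIntegral.integral_hasDerivAt_right (hc.intervalIntegrable _ _)
      (hc.stronglyMeasurableAtFilter _ _) hc.continuousAt
  have h1 : HasDerivAt (fun s => ∫ t in (0:ℝ)..(s-1), f (mv p t e)) (f (mv p (0-1) e)) 0 := by
    have := (h0 (0-1)).comp_sub_const 0 1
    simpa using this
  have h2 := (h0 0).sub h1
  have e1 : (fun s => cv e f (mv p s e)) =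
      (fun s => ∫ t in (0:ℝ)..s, f (mv p t e)) - (fun s => ∫ t in (0:ℝ)..(s-1), f (mv p t e)) := by
    ext s
    rw [cv_mv, Pi.sub_apply, intervalIntegral.integral_interval_sub_left] <;>
      exact hc.intervalIntegrable _ _
  rw [e1]
  have e2 : mv p 0 e = p := by simp [mv]
  rw [e2, zero_sub] at h2
  exact h2

/-- local linear independence -/
def LIon (Ω : Set Pt) (B : Pt → ℝ) (A : Finset (ℤ × ℤ)) : Prop :=
  ∀ c : ℤ × ℤ → ℝ, (∀ p ∈ Ω, ∑ u ∈ A, c u * B (ad p u) = 0) → ∀ u ∈ A, c u = 0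

lemma LI_step (Ω : Set Pt) (hΩ : IsOpen Ω) (e : ℤ × ℤ) (B' : Pt → ℝ) (hB' : Continuous B')
    (A' A : Finset (ℤ × ℤ)) (hLI : LIon Ω B' A')
    (hsub : ∀ u ∈ A', u ∈ A) (hsub' : ∀ u ∈ A', u + e ∈ A)
    (hv : ∀ u ∈ A, u ∉ A' → ∀ p ∈ Ω, B' (ad p u) = 0)
    (hv' : ∀ u ∈ A, u - e ∉ A' → ∀ p ∈ Ω, B' (ad p (u - e)) = 0)
    (l : ℤ × ℤ → ℤ) (K : Finset ℤ) (hl : ∀ u ∈ A, l u ∈ K) (hle : ∀ u ∈ A, l (u - e) = l u)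
    (st : ℤ → ℤ × ℤ) (hst : ∀ u ∈ A, u = st (l u) ∨ u - e ∈ A')
    (ht : ∀ u ∈ A, u - e ∈ A' → (u.1 - e.1 + (u.2 - e.2)).toNat < (u.1 + u.2).toNat)
    (g : Pt → ℤ → ℝ)
    (hls : ∀ p ∈ Ω, ∀ k ∈ K, ∑ u ∈ A with l u = k, cv e B' (ad p u) = g p k)
    (hg : ∀ d : ℤ → ℝ, (∀ p ∈ Ω, ∑ k ∈ K, d k * g p k = 0) → ∀ k ∈ K, d k = 0) :
    LIon Ω (cv e B') A := by
  intro c hc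
  have hder : ∀ p ∈ Ω, ∑ u ∈ A, c u * (B' (ad p u) - B' (ad p (u - e))) = 0 := by
    intro p hp
    have hD : HasDerivAt (fun s => ∑ u ∈ A, c u * cv e B' (ad (mv p s e) u))
        (∑ u ∈ A, c u * (B' (ad p u) - B' (ad p (u - e)))) 0 := by
      refine HasDerivAt.fun_sum fun u _ => ?_
      have := (cv_deriv e B' hB' (ad p u)).const_mul (c u)
      have e1 : ∀ s, mv (ad p u) s e = ad (mv p s e) u := by
        intro s
        simp only [mv, ad, Prod.mk.injEq]
        constructor <;> ring
      have e2 : mv (ad p u) (-1) e = ad p (u - e) := by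
        simp only [mv, ad, Prod.mk.injEq, Prod.fst_sub, Prod.snd_sub]
        push_cast
        constructor <;> ring
      simp only [e1] at this
      rw [← e1, e2] at this
      exact this
    have hZ : (fun s => ∑ u ∈ A, c u * cv e B' (ad (mv p s e) u)) =ᶠ[nhds 0] fun _ => 0 := by
      have : (fun s => mv p s e) ⁻¹' Ω ∈ nhds (0:ℝ) := by
        refine (hΩ.preimage (mv_cont' p e)).mem_nhds ?_
        simpa [mv] using hp
      filter_upwards [this] with s hs
      exact hc _ hs
    exact hD.unique ((hasDerivAt_const (0:ℝ) (0:ℝ)).congr_of_eventuallyEq hZ)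
  have hcc : ∀ u ∈ A', c u - c (u + e) = 0 := by
    refine hLI (fun u => c u - c (u + e)) ?_
    intro p hp
    rw [← hder p hp]
    simp only [sub_mul, mul_sub, Finset.sum_sub_distrib]
    congr 1
    · refine Finset.sum_subset hsub ?_
      intro u hu hu'
      rw [hv u hu hu' p hp, mul_zero]
    · have h1 : ∑ u ∈ A', c (u + e) * B' (ad p u)
          = ∑ u ∈ A'.map (addRightEmbedding e), c u * B' (ad p (u - e)) := by
        rw [Finset.sum_map]
        simp
      rw [h1]
      refine Finset.sum_subset ?_ ?_
      · intro u hu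
        obtain ⟨w, hw, rfl⟩ := Finset.mem_map.1 hu
        exact hsub' w hw
      · intro u hu hu'
        rw [hv' u hu ?_ p hp, mul_zero]
        intro h
        exact hu' (Finset.mem_map.2 ⟨u - e, h, by simp⟩)
  have hconst : ∀ N : ℕ, ∀ u ∈ A, (u.1 + u.2).toNat < N → c u = c (st (l u)) := by
    intro N
    induction N with
    | zero => intro u _ h; omega
    | succ N ih =>
      intro u hu h
      rcases hst u hu with h1 | h1
      · rw [← h1]
      · have h2 := ih (u - e) (hsub _ h1) (by
          have := ht u hu h1
          simp only [Prod.fst_sub, Prod.snd_sub]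
          omega)
        rw [hle u hu] at h2
        rw [← h2]
        have h3 := hcc _ h1
        rw [sub_add_cancel] at h3
        linarith
  have hd := hg (fun k => c (st k)) ?_
  · intro u hu
    rw [hconst _ u hu (Nat.lt_succ_self _)]
    exact hd _ (hl u hu)
  · intro p hp
    rw [← hc p hp, ← Finset.sum_fiberwise_of_maps_to hl]
    refine Finset.sum_congr rfl fun k hk => ?_
    rw [← hls p hp k hk, Finset.mul_sum]
    refine Finset.sum_congr rfl fun u hu => ?_
    obtain ⟨hu', rfl⟩ := Finset.mem_filter.1 hu
    rw [hconst _ u hu' (Nat.lt_succ_self _)]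

/-- line sums -/
def LS (e : ℤ × ℤ) (B g : Pt → ℝ) : Prop :=
  ∀ R : ℝ, ∃ M₀ : ℕ, ∀ M : ℕ, M₀ ≤ M → ∀ p : Pt, |p.1| ≤ R → |p.2| ≤ R →
    ∑ j ∈ Finset.Icc (-(M:ℤ)) M, B (mv p j e) = g p

lemma LS_step (e f : ℤ × ℤ) (hf : |(f.1:ℝ)| ≤ 1 ∧ |(f.2:ℝ)| ≤ 1) (B g : Pt → ℝ)
    (hB : Continuous B) (h : LS e B g) : LS e (cv f B) (cv f g) := by
  intro R
  obtain ⟨M₀, hM⟩ := h (R + 1)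
  refine ⟨M₀, fun M hMM p h1 h2 => ?_⟩
  unfold cv
  rw [← intervalIntegral.integral_finsetSum]
  · refine intervalIntegral.integral_congr fun t ht => ?_
    rw [Set.uIcc_of_le zero_le_one] at ht
    have ht' : |t| ≤ 1 := by rw [abs_of_nonneg ht.1]; exact ht.2
    show ∑ j ∈ Finset.Icc (-(M:ℤ)) M, B (mv (mv p j e) (-t) f) = g (mv p (-t) f)
    rw [← hM M hMM (mv p (-t) f)]
    · refine Finset.sum_congr rfl fun j _ => ?_
      congr 1
      simp only [mv, Prod.mk.injEq]
      constructor <;> ring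
    · simp only [mv]
      refine (abs_add_le _ _).trans (add_le_add h1 ?_)
      rw [abs_mul, abs_neg]
      exact mul_le_one₀ ht' (abs_nonneg _) hf.1
    · simp only [mv]
      refine (abs_add_le _ _).trans (add_le_add h2 ?_)
      rw [abs_mul, abs_neg]
      exact mul_le_one₀ ht' (abs_nonneg _) hf.2
  · intro j _
    refine Continuous.intervalIntegrable ?_ _ _
    exact hB.comp ((mv_cont f).comp (by fun_prop : Continuous fun t : ℝ => (mv p j e, t)))

lemma LS_use (e : ℤ × ℤ) (he : e.1 ≠ 0 ∨ e.2 ≠ 0) (B g : Pt → ℝ) (h : LS e B g)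
    (Ω : Set Pt) (A : Finset (ℤ × ℤ)) (l : ℤ × ℤ → ℤ) (u₀ : ℤ × ℤ)
    (hl : ∀ u, u ∈ A → (l u = l u₀ ↔ ∃ j : ℤ, u = u₀ + j • e))
    (hv : ∀ u : ℤ × ℤ, u ∉ A → (∃ j : ℤ, u = u₀ + j • e) → ∀ p ∈ Ω, B (ad p u) = 0) (p : Pt) (hp : p ∈ Ω) :
    ∑ u ∈ A with l u = l u₀, B (ad p u) = g (ad p u₀) := by
  have hinj : Function.Injective (fun j : ℤ => u₀ + j • e) := by
    intro i j hij
    have h1 := congrArg Prod.fst hij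
    have h2 := congrArg Prod.snd hij
    simp only [Prod.fst_add, Prod.snd_add, Prod.smul_fst, Prod.smul_snd, smul_eq_mul,
      add_right_inj, mul_eq_mul_right_iff] at h1 h2
    rcases he with he | he
    · exact h1.resolve_right he
    · exact h2.resolve_right he
  obtain ⟨M₀, hM⟩ := h (max |(ad p u₀).1| |(ad p u₀).2|)
  set S := A.preimage (fun j : ℤ => u₀ + j • e) hinj.injOn with hS
  obtain ⟨N, hN⟩ : ∃ N : ℕ, ∀ j ∈ S, j.natAbs ≤ N :=
    ⟨S.sup Int.natAbs, fun j hj => Finset.le_sup (f := Int.natAbs) hj⟩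
  rw [← hM (max M₀ N) (le_max_left _ _) _ (le_max_left _ _) (le_max_right _ _)]
  have key : ∀ j : ℤ, mv (ad p u₀) j e = ad p (u₀ + j • e) := by
    intro j
    simp only [mv, ad, Prod.fst_add, Prod.snd_add, Prod.smul_fst, Prod.smul_snd, smul_eq_mul,
      Prod.mk.injEq]
    push_cast
    constructor <;> ring
  have h1 : ∑ j ∈ Finset.Icc (-((max M₀ N : ℕ):ℤ)) ((max M₀ N : ℕ) : ℤ), B (mv (ad p u₀) j e)
      = ∑ j ∈ S, B (ad p (u₀ + j • e)) := by
    symm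
    simp only [key]
    refine Finset.sum_subset ?_ ?_
    · intro j hj
      have := hN j hj
      rw [Finset.mem_Icc]
      omega
    · intro j _ hj
      refine hv _ ?_ ⟨j, rfl⟩ p hp
      simpa [hS] using hj
  rw [h1]
  classical
  rw [Finset.sum_preimage' (fun j : ℤ => u₀ + j • e) A hinj.injOn (fun u => B (ad p u))]
  refine Finset.sum_congr ?_ fun _ _ => rfl
  ext u
  simp only [Finset.mem_filter, Set.mem_range]
  constructor
  · rintro ⟨a, b⟩
    obtain ⟨j, hj⟩ := (hl u a).1 b
    exact ⟨a, j, hj.symm⟩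
  · rintro ⟨a, j, hj⟩
    exact ⟨a, (hl u a).2 ⟨j, hj.symm⟩⟩

/-- piecewise polynomial on the grid -/
def IsPP (f : Pt → ℝ) : Prop := ∀ T : Tri, ∃ q : BPoly, ∀ p ∈ T.toSet, f p = evalP q p

lemma evalP_mv (e : ℤ × ℤ) (q : BPoly) (p : Pt) (t : ℝ) :
    evalP q (mv p (-t) e) = Polynomial.eval₂ (MvPolynomial.eval ![p.1, p.2]) t
      (MvPolynomial.aeval (![Polynomial.C (X 0) - Polynomial.C (C (e.1:ℝ)) * Polynomial.X,
        Polynomial.C (X 1) - Polynomial.C (C (e.2:ℝ)) * Polynomial.X] :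
          Fin 2 → Polynomial BPoly) q) := by
  unfold evalP
  induction q using MvPolynomial.induction_on with
  | C a =>
    simp only [MvPolynomial.eval_C, MvPolynomial.aeval_C]
    rw [Polynomial.algebraMap_apply, Polynomial.eval₂_C]
    simp [MvPolynomial.algebraMap_eq]
  | add p q hp hq => simp only [map_add, Polynomial.eval₂_add, hp, hq]
  | mul_X q i h =>
    simp only [map_mul, Polynomial.eval₂_mul, h]
    congr 1
    simp only [mv]
    generalize (e.1:ℝ) = r1
    generalize (e.2:ℝ) = r2
    fin_cases i <;> simp <;> ring

lemma int_poly (e : ℤ × ℤ) (q α β : BPoly) : ∃ r : BPoly, ∀ p : Pt,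
    evalP r p = ∫ t in (evalP α p)..(evalP β p), evalP q (mv p (-t) e) := by
  set Q := (MvPolynomial.aeval (![Polynomial.C (X 0) - Polynomial.C (C (e.1:ℝ)) * Polynomial.X,
        Polynomial.C (X 1) - Polynomial.C (C (e.2:ℝ)) * Polynomial.X] :
          Fin 2 → Polynomial BPoly) q) with hQ
  refine ⟨∑ i ∈ Finset.range (Q.natDegree + 1),
    Q.coeff i * (C ((1:ℝ) / ((i:ℝ) + 1)) * (β ^ (i+1) - α ^ (i+1))), fun p => ?_⟩
  simp only [evalP_mv]
  rw [← hQ]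
  simp only [Polynomial.eval₂_eq_sum_range]
  rw [intervalIntegral.integral_finsetSum]
  · unfold evalP
    rw [map_sum]
    refine Finset.sum_congr rfl fun i _ => ?_
    rw [intervalIntegral.integral_const_mul, integral_pow]
    simp only [map_mul, map_sub, map_pow, MvPolynomial.eval_C]
    ring
  · intro i _
    refine Continuous.intervalIntegrable ?_ _ _
    fun_prop

lemma int_congr_Ioo (f g : ℝ → ℝ) (a b : ℝ) (hab : a ≤ b)
    (h : ∀ t, a < t → t < b → f t = g t) : ∫ t in a..b, f t = ∫ t in a..b, g t := by
  rw [intervalIntegral.integral_of_le hab, intervalIntegral.integral_of_le hab,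
    MeasureTheory.integral_Ioc_eq_integral_Ioo, MeasureTheory.integral_Ioc_eq_integral_Ioo]
  exact MeasureTheory.setIntegral_congr_fun measurableSet_Ioo fun t ht => h t ht.1 ht.2

lemma PP_case (e : ℤ × ℤ) (f : Pt → ℝ) (hf : Continuous f) (hpp : IsPP f)
    (T T1 T2 T3 : Tri) (α β : BPoly)
    (h : ∀ p ∈ T.toSet, 0 ≤ evalP α p ∧ evalP α p ≤ evalP β p ∧ evalP β p ≤ 1 ∧
      (∀ t, 0 < t → t < evalP α p → mv p (-t) e ∈ T1.toSet) ∧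
      (∀ t, evalP α p < t → t < evalP β p → mv p (-t) e ∈ T2.toSet) ∧
      (∀ t, evalP β p < t → t < 1 → mv p (-t) e ∈ T3.toSet)) :
    ∃ q : BPoly, ∀ p ∈ T.toSet, cv e f p = evalP q p := by
  obtain ⟨q1, h1⟩ := hpp T1
  obtain ⟨q2, h2⟩ := hpp T2
  obtain ⟨q3, h3⟩ := hpp T3
  obtain ⟨r1, k1⟩ := int_poly e q1 (C 0) α
  obtain ⟨r2, k2⟩ := int_poly e q2 α β
  obtain ⟨r3, k3⟩ := int_poly e q3 β (C 1)
  refine ⟨r1 + r2 + r3, fun p hp => ?_⟩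
  obtain ⟨a1, a2, a3, a4, a5, a6⟩ := h p hp
  have hadd : evalP (r1 + r2 + r3) p = evalP r1 p + evalP r2 p + evalP r3 p := by
    simp [evalP]
  have hC : ∀ a : ℝ, evalP (C a) p = a := by intro a; simp [evalP]
  have hi : ∀ a b : ℝ, IntervalIntegrable (fun t => f (mv p (-t) e)) MeasureTheory.volume a b := by
    intro a b
    refine Continuous.intervalIntegrable ?_ _ _
    exact hf.comp ((mv_cont' p e).comp continuous_neg)
  rw [hadd, k1, k2, k3, hC, hC]
  unfold cv
  rw [← intervalIntegral.integral_add_adjacent_intervals (hi 0 (evalP β p)) (hi _ 1),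
    ← intervalIntegral.integral_add_adjacent_intervals (hi 0 (evalP α p)) (hi _ (evalP β p))]
  congr 1
  · congr 1
    · exact int_congr_Ioo _ _ _ _ a1 fun t s1 s2 => h1 _ (a4 t s1 s2)
    · exact int_congr_Ioo _ _ _ _ a2 fun t s1 s2 => h2 _ (a5 t s1 s2)
  · exact int_congr_Ioo _ _ _ _ a3 fun t s1 s2 => h3 _ (a6 t s1 s2)

/-- affine polynomial -/
def lin (a b c : ℝ) : BPoly := C a * X 0 + C b * X 1 + C c

lemma evalP_lin (a b c : ℝ) (p : Pt) : evalP (lin a b c) p = a * p.1 + b * p.2 + c := by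
  simp [evalP, lin]

lemma mem_low (v : ℤ × ℤ) (p : Pt) : p ∈ (Tri.mk v false).toSet ↔
    (v.2 : ℝ) < p.2 ∧ p.2 - (v.2 : ℝ) < p.1 - (v.1 : ℝ) ∧ p.1 < (v.1 : ℝ) + 1 := by
  simp [Tri.toSet]

lemma mem_up (v : ℤ × ℤ) (p : Pt) : p ∈ (Tri.mk v true).toSet ↔
    (v.1 : ℝ) < p.1 ∧ p.1 - (v.1 : ℝ) < p.2 - (v.2 : ℝ) ∧ p.2 < (v.2 : ℝ) + 1 := by
  simp [Tri.toSet]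

lemma PP_e1 (f : Pt → ℝ) (hf : Continuous f) (hpp : IsPP f) : IsPP (cv (1, 0) f) := by
  rintro ⟨⟨a, b⟩, _ | _⟩
  · refine PP_case _ f hf hpp _ ⟨(a, b), false⟩ ⟨(a, b), true⟩ ⟨(a-1, b), false⟩
      (lin 1 (-1) (b - a)) (lin 1 0 (-a)) ?_
    intro p hp
    simp only [mem_low, mem_up, mv, evalP_lin] at hp ⊢
    push_cast
    refine ⟨?_, ?_, ?_, ?_, ?_, ?_⟩ <;> intros <;> (try refine ⟨?_, ?_, ?_⟩) <;> linarith
  · refine PP_case _ f hf hpp _ ⟨(a, b), true⟩ ⟨(a-1, b), false⟩ ⟨(a-1, b), true⟩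
      (lin 1 0 (-a)) (lin 1 (-1) (b - a + 1)) ?_
    intro p hp
    simp only [mem_low, mem_up, mv, evalP_lin] at hp ⊢
    push_cast
    refine ⟨?_, ?_, ?_, ?_, ?_, ?_⟩ <;> intros <;> (try refine ⟨?_, ?_, ?_⟩) <;> linarith

lemma PP_e2 (f : Pt → ℝ) (hf : Continuous f) (hpp : IsPP f) : IsPP (cv (0, 1) f) := by
  rintro ⟨⟨a, b⟩, _ | _⟩
  · refine PP_case _ f hf hpp _ ⟨(a, b), false⟩ ⟨(a, b-1), true⟩ ⟨(a, b-1), false⟩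
      (lin 0 1 (-b)) (lin (-1) 1 (a - b + 1)) ?_
    intro p hp
    simp only [mem_low, mem_up, mv, evalP_lin] at hp ⊢
    push_cast
    refine ⟨?_, ?_, ?_, ?_, ?_, ?_⟩ <;> intros <;> (try refine ⟨?_, ?_, ?_⟩) <;> linarith
  · refine PP_case _ f hf hpp _ ⟨(a, b), true⟩ ⟨(a, b), false⟩ ⟨(a, b-1), true⟩
      (lin (-1) 1 (a-b)) (lin 0 1 (-b)) ?_
    intro p hp
    simp only [mem_low, mem_up, mv, evalP_lin] at hp ⊢
    push_cast
    refine ⟨?_, ?_, ?_, ?_, ?_, ?_⟩ <;> intros <;> (try refine ⟨?_, ?_, ?_⟩) <;> linarith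

lemma PP_e3 (f : Pt → ℝ) (hf : Continuous f) (hpp : IsPP f) : IsPP (cv (1, 1) f) := by
  rintro ⟨⟨a, b⟩, _ | _⟩
  · refine PP_case _ f hf hpp _ ⟨(a, b), false⟩ ⟨(a, b-1), true⟩ ⟨(a-1, b-1), false⟩
      (lin 0 1 (-b)) (lin 1 0 (-a)) ?_
    intro p hp
    simp only [mem_low, mem_up, mv, evalP_lin] at hp ⊢
    push_cast
    refine ⟨?_, ?_, ?_, ?_, ?_, ?_⟩ <;> intros <;> (try refine ⟨?_, ?_, ?_⟩) <;> linarith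
  · refine PP_case _ f hf hpp _ ⟨(a, b), true⟩ ⟨(a-1, b), false⟩ ⟨(a-1, b-1), true⟩
      (lin 1 0 (-a)) (lin 0 1 (-b)) ?_
    intro p hp
    simp only [mem_low, mem_up, mv, evalP_lin] at hp ⊢
    push_cast
    refine ⟨?_, ?_, ?_, ?_, ?_, ?_⟩ <;> intros <;> (try refine ⟨?_, ?_, ?_⟩) <;> linarith

/-- the open hexagon supporting the box spline -/
def hexR (a b c : ℕ) (p : Pt) : Prop :=
  0 < p.1 ∧ p.1 < (a:ℝ) + c ∧ 0 < p.2 ∧ p.2 < (b:ℝ) + c ∧ -(b:ℝ) < p.1 - p.2 ∧ p.1 - p.2 < a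

lemma hat_cont : Continuous hat := by
  unfold hat; fun_prop

lemma hat_supp (p : Pt) (h : hat p ≠ 0) : hexR 1 1 1 p := by
  have : 0 < (min (min (min p.1 p.2) (min (2 - p.1) (2 - p.2)))
             (min (1 - (p.1 - p.2)) (1 + (p.1 - p.2)))) := by
    by_contra h'
    exact h (max_eq_left (not_lt.1 h'))
  simp only [lt_min_iff] at this
  obtain ⟨⟨⟨h1, h2⟩, h3, h4⟩, h5, h6⟩ := this
  refine ⟨?_, ?_, ?_, ?_, ?_, ?_⟩ <;> norm_num <;> linarith

lemma hat_val (p : Pt) (r : ℝ) (h0 : 0 ≤ r) (h1 : r ≤ p.1) (h2 : r ≤ p.2) (h3 : r ≤ 2 - p.1)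
    (h4 : r ≤ 2 - p.2) (h5 : r ≤ 1 - (p.1 - p.2)) (h6 : r ≤ 1 + (p.1 - p.2))
    (h : r = p.1 ∨ r = p.2 ∨ r = 2 - p.1 ∨ r = 2 - p.2 ∨ r = 1 - (p.1 - p.2) ∨
      r = 1 + (p.1 - p.2)) : hat p = r := by
  unfold hat
  rw [max_eq_right]
  · apply le_antisymm
    · rcases h with h | h | h | h | h | h <;> rw [h] <;> simp
    · simp [h1, h2, h3, h4]
      exact ⟨by linarith, by linarith⟩
  · simp only [le_min_iff]
    refine ⟨⟨⟨?_, ?_⟩, ?_, ?_⟩, ?_, ?_⟩ <;> linarith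

lemma hat_PP : IsPP hat := by
  rintro ⟨⟨a, b⟩, _ | _⟩
  · by_cases h00 : a = 0 ∧ b = 0
    · obtain ⟨rfl, rfl⟩ := h00
      refine ⟨lin 0 1 0, fun p hp => ?_⟩
      rw [evalP_lin]
      simp only [mem_low] at hp
      push_cast at hp
      apply hat_val <;> first | linarith | (right; left; ring)
    by_cases h01 : a = 0 ∧ b = 1
    · obtain ⟨rfl, rfl⟩ := h01
      refine ⟨lin 1 (-1) 1, fun p hp => ?_⟩
      rw [evalP_lin]
      simp only [mem_low] at hp
      push_cast at hp
      apply hat_val <;> first | linarith | (right; right; right; right; right; ring)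
    by_cases h11 : a = 1 ∧ b = 1
    · obtain ⟨rfl, rfl⟩ := h11
      refine ⟨lin (-1) 0 2, fun p hp => ?_⟩
      rw [evalP_lin]
      simp only [mem_low] at hp
      push_cast at hp
      apply hat_val <;> first | linarith | (right; right; left; ring)
    refine ⟨lin 0 0 0, fun p hp => ?_⟩
    simp only [evalP_lin, mem_low] at *
    by_contra hne
    obtain ⟨g1, g2, g3, g4, g5, g6⟩ := hat_supp p (by intro h; apply hne; rw [h]; ring)
    push_cast at g1 g2 g3 g4 g5 g6
    have k1 : (-1:ℝ) < (a:ℝ) := by linarith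
    have k2 : (a:ℝ) < 2 := by linarith
    have k3 : (-1:ℝ) < (b:ℝ) := by linarith
    have k4 : (b:ℝ) < 2 := by linarith
    have k5 : (a:ℝ) < b + 1 := by linarith
    have k6 : (b:ℝ) < a + 2 := by linarith
    norm_cast at k1 k2 k3 k4 k5 k6
    omega
  · by_cases h00 : a = 0 ∧ b = 0
    · obtain ⟨rfl, rfl⟩ := h00
      refine ⟨lin 1 0 0, fun p hp => ?_⟩
      rw [evalP_lin]
      simp only [mem_up] at hp
      push_cast at hp
      apply hat_val <;> first | linarith | (left; ring)
    by_cases h01 : a = 1 ∧ b = 0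
    · obtain ⟨rfl, rfl⟩ := h01
      refine ⟨lin (-1) 1 1, fun p hp => ?_⟩
      rw [evalP_lin]
      simp only [mem_up] at hp
      push_cast at hp
      apply hat_val <;> first | linarith | (right; right; right; right; left; ring)
    by_cases h11 : a = 1 ∧ b = 1
    · obtain ⟨rfl, rfl⟩ := h11
      refine ⟨lin 0 (-1) 2, fun p hp => ?_⟩
      rw [evalP_lin]
      simp only [mem_up] at hp
      push_cast at hp
      apply hat_val <;> first | linarith | (right; right; right; left; ring)
    refine ⟨lin 0 0 0, fun p hp => ?_⟩
    simp only [evalP_lin, mem_up] at *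
    by_contra hne
    obtain ⟨g1, g2, g3, g4, g5, g6⟩ := hat_supp p (by intro h; apply hne; rw [h]; ring)
    push_cast at g1 g2 g3 g4 g5 g6
    have k1 : (-1:ℝ) < (a:ℝ) := by linarith
    have k2 : (a:ℝ) < 2 := by linarith
    have k3 : (-1:ℝ) < (b:ℝ) := by linarith
    have k4 : (b:ℝ) < 2 := by linarith
    have k5 : (a:ℝ) < b + 2 := by linarith
    have k6 : (b:ℝ) < a + 1 := by linarith
    norm_cast at k1 k2 k3 k4 k5 k6
    omega

lemma LS_base (e : ℤ × ℤ) (f g π : Pt → ℝ) (hπ : ∀ p s, π (mv p s e) = π p + s)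
    (hb : ∀ p : Pt, |π p| ≤ |p.1| + |p.2|)
    (hs : ∀ p, f p ≠ 0 → 0 < π p ∧ π p < 2)
    (hg : ∀ p, 0 ≤ π p → π p < 1 → f p + f (mv p 1 e) = g p)
    (hinv : ∀ p s, g (mv p s e) = g p) : LS e f g := by
  intro R
  obtain ⟨N, hN⟩ := exists_nat_gt (R + R)
  refine ⟨N + 3, fun M hM p h1 h2 => ?_⟩
  have hp : |π p| < N := lt_of_le_of_lt ((hb p).trans (add_le_add h1 h2)) hN
  rw [abs_lt] at hp
  have hM' : ((N:ℝ) + 3) ≤ M := by exact_mod_cast hM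
  set a : ℤ := -⌊π p⌋ with ha
  have hf1 := Int.floor_le (π p)
  have hf2 := Int.lt_floor_add_one (π p)
  have haR : (a:ℝ) = -(⌊π p⌋ : ℝ) := by rw [ha]; push_cast; ring
  have hsub : ({a, a + 1} : Finset ℤ) ⊆ Finset.Icc (-(M:ℤ)) M := by
    have k1 : (-(M:ℝ)) ≤ a := by rw [haR]; linarith
    have k2 : (a:ℝ) + 1 ≤ M := by rw [haR]; linarith
    have k1' : (-(M:ℤ)) ≤ a := by exact_mod_cast k1
    have k2' : a + 1 ≤ (M:ℤ) := by exact_mod_cast k2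
    intro j hj
    simp only [Finset.mem_insert, Finset.mem_singleton] at hj
    rw [Finset.mem_Icc]
    omega
  rw [← Finset.sum_subset hsub]
  · rw [Finset.sum_pair (by omega)]
    have hm : mv p ((a + 1 : ℤ) : ℝ) e = mv (mv p (a:ℝ) e) 1 e := by
      simp only [mv, Prod.mk.injEq]
      push_cast
      constructor <;> ring
    rw [hm, hg, hinv]
    · rw [hπ, haR]; linarith
    · rw [hπ, haR]; linarith
  · intro j _ hj
    by_contra hne
    obtain ⟨g1, g2⟩ := hs _ hne
    rw [hπ] at g1 g2
    have k1 : ((⌊π p⌋ + j : ℤ) : ℝ) < 2 := by push_cast; linarith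
    have k2 : (-1 : ℝ) < ((⌊π p⌋ + j : ℤ) : ℝ) := by push_cast; linarith
    have k1' : ⌊π p⌋ + j < 2 := by exact_mod_cast k1
    have k2' : -1 < ⌊π p⌋ + j := by exact_mod_cast k2
    apply hj
    simp only [Finset.mem_insert, Finset.mem_singleton]
    omega

/-- univariate cardinal B-splines (of order `m + 2`) -/
def Nsp : ℕ → ℝ → ℝ
  | 0, y => max 0 (min y (2 - y))
  | m + 1, y => ∫ t in (0:ℝ)..1, Nsp m (y - t)

lemma Nsp0_val1 (y : ℝ) (h0 : 0 ≤ y) (h1 : y ≤ 1) : Nsp 0 y = y := by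
  rw [Nsp, min_eq_left (by linarith), max_eq_right h0]

lemma Nsp0_val2 (y : ℝ) (h0 : 1 ≤ y) (h1 : y ≤ 2) : Nsp 0 y = 2 - y := by
  rw [Nsp, min_eq_right (by linarith), max_eq_right (by linarith)]

lemma Nsp0_val3 (y : ℝ) (h0 : y ≤ 0 ∨ 2 ≤ y) : Nsp 0 y = 0 := by
  rw [Nsp, max_eq_left]
  rcases h0 with h | h
  · exact (min_le_left _ _).trans h
  · exact (min_le_right _ _).trans (by linarith)

lemma hat_zero (p : Pt) (h : p.1 ≤ 0 ∨ p.2 ≤ 0 ∨ 2 ≤ p.1 ∨ 2 ≤ p.2 ∨ 1 ≤ p.1 - p.2 ∨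
    p.1 - p.2 ≤ -1) : hat p = 0 := by
  by_contra hne
  obtain ⟨g1, g2, g3, g4, g5, g6⟩ := hat_supp p hne
  push_cast at g1 g2 g3 g4 g5 g6
  rcases h with h | h | h | h | h | h <;> linarith

lemma hat_swap (x y : ℝ) : hat (x, y) = hat (y, x) := by
  simp only [hat]
  congr 2
  · rw [min_comm x y, min_comm (2 - x)]
  · rw [min_comm]
    congr 1 <;> ring

lemma hat_sum1 (f y : ℝ) (h0 : 0 ≤ f) (h1 : f < 1) : hat (f, y) + hat (f + 1, y) = Nsp 0 y := by
  rcases le_total y 0 with h | h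
  · rw [hat_zero, hat_zero, Nsp0_val3 _ (Or.inl h), add_zero] <;> simp [h]
  rcases le_total 2 y with h' | h'
  · rw [hat_zero, hat_zero, Nsp0_val3 _ (Or.inr h'), add_zero] <;> simp [h']
  rcases le_total y 1 with hy | hy
  · rw [Nsp0_val1 y h hy]
    rcases le_total y f with hf | hf
    · rw [hat_val _ y, hat_zero, add_zero]
      all_goals first
        | (left; rfl)
        | (right; left; rfl)
        | (right; right; right; left; rfl)
        | ((try dsimp only); linarith)
        | (left; (try dsimp only); linarith)
        | (right; left; (try dsimp only); linarith)
        | (right; right; left; (try dsimp only); linarith)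
        | (right; right; right; left; (try dsimp only); linarith)
        | (right; right; right; right; left; (try dsimp only); linarith)
        | (right; right; right; right; right; (try dsimp only); linarith)
    · rw [hat_val _ f, hat_val _ (y - f)]
      all_goals first
        | (left; rfl)
        | (right; left; rfl)
        | (right; right; right; left; rfl)
        | ((try dsimp only); linarith)
        | (left; (try dsimp only); linarith)
        | (right; left; (try dsimp only); linarith)
        | (right; right; left; (try dsimp only); linarith)
        | (right; right; right; left; (try dsimp only); linarith)
        | (right; right; right; right; left; (try dsimp only); linarith)
        | (right; right; right; right; right; (try dsimp only); linarith)
  · rw [Nsp0_val2 y hy h']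
    rcases le_total y (1 + f) with hf | hf
    · rw [hat_val _ (1 + f - y), hat_val _ (1 - f)]
      all_goals first
        | (left; rfl)
        | (right; left; rfl)
        | (right; right; right; left; rfl)
        | ((try dsimp only); linarith)
        | (left; (try dsimp only); linarith)
        | (right; left; (try dsimp only); linarith)
        | (right; right; left; (try dsimp only); linarith)
        | (right; right; right; left; (try dsimp only); linarith)
        | (right; right; right; right; left; (try dsimp only); linarith)
        | (right; right; right; right; right; (try dsimp only); linarith)
    · rw [hat_zero, hat_val _ (2 - y), zero_add]
      all_goals first
        | (left; rfl)
        | (right; left; rfl)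
        | (right; right; right; left; rfl)
        | ((try dsimp only); linarith)
        | (left; (try dsimp only); linarith)
        | (right; left; (try dsimp only); linarith)
        | (right; right; left; (try dsimp only); linarith)
        | (right; right; right; left; (try dsimp only); linarith)
        | (right; right; right; right; left; (try dsimp only); linarith)
        | (right; right; right; right; right; (try dsimp only); linarith)

lemma hat_sum3 (f y : ℝ) (h0 : 0 ≤ f) (h1 : f < 1) :
    hat (f, y) + hat (f + 1, y + 1) = Nsp 0 (f - y + 1) := by
  rcases le_total (f - y) (-1) with h | h
  · rw [hat_zero, hat_zero, Nsp0_val3 _ (Or.inl (by linarith)), add_zero]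
    all_goals first
      | (left; rfl)
      | (right; left; rfl)
      | (right; right; right; left; rfl)
      | ((try dsimp only); linarith)
      | (left; (try dsimp only); linarith)
      | (right; left; (try dsimp only); linarith)
      | (right; right; left; (try dsimp only); linarith)
      | (right; right; right; left; (try dsimp only); linarith)
      | (right; right; right; right; left; (try dsimp only); linarith)
      | (right; right; right; right; right; (try dsimp only); linarith)
  rcases le_total 1 (f - y) with h' | h'
  · rw [hat_zero, hat_zero, Nsp0_val3 _ (Or.inr (by linarith)), add_zero]
    all_goals first
      | (left; rfl)
      | (right; left; rfl)
      | (right; right; right; left; rfl)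
      | ((try dsimp only); linarith)
      | (left; (try dsimp only); linarith)
      | (right; left; (try dsimp only); linarith)
      | (right; right; left; (try dsimp only); linarith)
      | (right; right; right; left; (try dsimp only); linarith)
      | (right; right; right; right; left; (try dsimp only); linarith)
      | (right; right; right; right; right; (try dsimp only); linarith)
  rcases le_total 0 (f - y) with hz | hz
  · rw [Nsp0_val2 _ (by linarith) (by linarith)]
    rcases le_total y 0 with hy | hy
    · rw [hat_zero, hat_val _ (1 - (f - y))]
      all_goals first
        | (left; rfl)
        | (right; left; rfl)
        | (right; right; right; left; rfl)
        | ((try dsimp only); linarith)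
        | (left; (try dsimp only); linarith)
        | (right; left; (try dsimp only); linarith)
        | (right; right; left; (try dsimp only); linarith)
        | (right; right; right; left; (try dsimp only); linarith)
        | (right; right; right; right; left; (try dsimp only); linarith)
        | (right; right; right; right; right; (try dsimp only); linarith)
    · rw [hat_val _ y, hat_val _ (1 - f)]
      all_goals first
        | (left; rfl)
        | (right; left; rfl)
        | (right; right; right; left; rfl)
        | ((try dsimp only); linarith)
        | (left; (try dsimp only); linarith)
        | (right; left; (try dsimp only); linarith)
        | (right; right; left; (try dsimp only); linarith)
        | (right; right; right; left; (try dsimp only); linarith)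
        | (right; right; right; right; left; (try dsimp only); linarith)
        | (right; right; right; right; right; (try dsimp only); linarith)
  · rw [Nsp0_val1 _ (by linarith) (by linarith)]
    rcases le_total y 1 with hy | hy
    · rw [hat_val _ f, hat_val _ (1 - y)]
      all_goals first
        | (left; rfl)
        | (right; left; rfl)
        | (right; right; right; left; rfl)
        | ((try dsimp only); linarith)
        | (left; (try dsimp only); linarith)
        | (right; left; (try dsimp only); linarith)
        | (right; right; left; (try dsimp only); linarith)
        | (right; right; right; left; (try dsimp only); linarith)
        | (right; right; right; right; left; (try dsimp only); linarith)
        | (right; right; right; right; right; (try dsimp only); linarith)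
    · rw [hat_val _ (1 + f - y), hat_zero]
      all_goals first
        | (left; rfl)
        | (right; left; rfl)
        | (right; right; right; left; rfl)
        | ((try dsimp only); linarith)
        | (left; (try dsimp only); linarith)
        | (right; left; (try dsimp only); linarith)
        | (right; right; left; (try dsimp only); linarith)
        | (right; right; right; left; (try dsimp only); linarith)
        | (right; right; right; right; left; (try dsimp only); linarith)
        | (right; right; right; right; right; (try dsimp only); linarith)

lemma hat_LS1 : LS (1, 0) hat (fun p => Nsp 0 p.2) := by
  refine LS_base _ _ _ (fun p => p.1) ?_ ?_ ?_ ?_ ?_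
  · intro p s; simp [mv]
  · intro p; simp
  · intro p h
    obtain ⟨g1, g2, _⟩ := hat_supp p h
    push_cast at g2
    exact ⟨g1, by linarith⟩
  · rintro ⟨x, y⟩ h0 h1
    simpa [mv] using hat_sum1 x y h0 h1
  · intro p s; simp [mv]

lemma hat_LS2 : LS (0, 1) hat (fun p => Nsp 0 p.1) := by
  refine LS_base _ _ _ (fun p => p.2) ?_ ?_ ?_ ?_ ?_
  · intro p s; simp [mv]
  · intro p; simp
  · intro p h
    obtain ⟨g1, g2, g3, g4, _⟩ := hat_supp p h
    push_cast at g4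
    exact ⟨g3, by linarith⟩
  · rintro ⟨x, y⟩ h0 h1
    have := hat_sum1 y x h0 h1
    rw [hat_swap, hat_swap (y + 1)] at this
    simpa [mv] using this
  · intro p s; simp [mv]

lemma hat_LS3 : LS (1, 1) hat (fun p => Nsp 0 (p.1 - p.2 + 1)) := by
  refine LS_base _ _ _ (fun p => p.1) ?_ ?_ ?_ ?_ ?_
  · intro p s; simp [mv]
  · intro p; simp
  · intro p h
    obtain ⟨g1, g2, _⟩ := hat_supp p h
    push_cast at g2
    exact ⟨g1, by linarith⟩
  · rintro ⟨x, y⟩ h0 h1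
    simpa [mv] using hat_sum3 x y h0 h1
  · intro p s; simp [mv]

lemma Nsp_supp (m : ℕ) : ∀ y, Nsp m y ≠ 0 → 0 < y ∧ y < m + 2 := by
  induction m with
  | zero =>
    intro y h
    constructor
    · by_contra h'
      exact h (Nsp0_val3 y (Or.inl (not_lt.1 h')))
    · by_contra h'
      push_cast at h'
      exact h (Nsp0_val3 y (Or.inr (by linarith)))
  | succ m ih =>
    intro y h
    by_contra hc
    apply h
    rw [Nsp]
    rw [int_congr_Ioo _ (fun _ => 0) 0 1 zero_le_one]
    · simp
    · intro t h0 h1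
      by_contra hne
      obtain ⟨k1, k2⟩ := ih _ hne
      apply hc
      push_cast
      constructor <;> linarith

/-- bivariate version -/
def NB (m : ℕ) (p : Pt) : ℝ := Nsp m p.2

lemma NB_cv (m : ℕ) : cv (0, 1) (NB m) = NB (m + 1) := by
  ext p
  simp [cv, NB, Nsp, mv, sub_eq_add_neg]

lemma NB_cont (m : ℕ) : Continuous (NB m) := by
  induction m with
  | zero => unfold NB; simp only [Nsp]; fun_prop
  | succ m ih => rw [← NB_cv]; exact cv_cont _ _ ih

lemma NB_LS (m : ℕ) : LS (0, 1) (NB m) (fun _ => 1) := by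
  induction m with
  | zero =>
    refine LS_base _ _ _ (fun p => p.2) ?_ ?_ ?_ ?_ ?_
    · intro p s; simp [mv]
    · intro p; simp
    · intro p h
      have := Nsp_supp 0 p.2 h
      push_cast at this
      simpa using this
    · rintro ⟨x, y⟩ h0 h1
      dsimp only at h0 h1
      simp only [NB, mv]
      push_cast
      rw [mul_one, Nsp0_val1 y h0 h1.le, Nsp0_val2 _ (by linarith) (by linarith)]
      ring
    · intro p s; rfl
  | succ m ih =>
    rw [← NB_cv]
    have := LS_step (0, 1) (0, 1) (by simp) _ _ (NB_cont m) ih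
    convert this using 1
    ext p
    simp [cv]

/-- reference triangle -/
def Om (up : Bool) : Set Pt := (Tri.mk (0, 0) up).toSet

lemma mem_Om_low (p : Pt) : p ∈ Om false ↔ 0 < p.2 ∧ p.2 < p.1 ∧ p.1 < 1 := by
  simp [Om, Tri.toSet]

lemma mem_Om_up (p : Pt) : p ∈ Om true ↔ 0 < p.1 ∧ p.1 < p.2 ∧ p.2 < 1 := by
  simp [Om, Tri.toSet]

lemma Om_open (up : Bool) : IsOpen (Om up) := by
  cases up
  · have : Om false = {p : Pt | 0 < p.2} ∩ ({p | p.2 < p.1} ∩ {p | p.1 < 1}) := by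
      ext p; rw [mem_Om_low]; rfl
    rw [this]
    exact (isOpen_lt (by fun_prop) (by fun_prop)).inter
      ((isOpen_lt (by fun_prop) (by fun_prop)).inter (isOpen_lt (by fun_prop) (by fun_prop)))
  · have : Om true = {p : Pt | 0 < p.1} ∩ ({p | p.1 < p.2} ∩ {p | p.2 < 1}) := by
      ext p; rw [mem_Om_up]; rfl
    rw [this]
    exact (isOpen_lt (by fun_prop) (by fun_prop)).inter
      ((isOpen_lt (by fun_prop) (by fun_prop)).inter (isOpen_lt (by fun_prop) (by fun_prop)))

/-- index set for the univariate case -/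
def AU (m : ℕ) : Finset (ℤ × ℤ) := ({0} : Finset ℤ) ×ˢ Finset.Ico (0:ℤ) ((m:ℤ) + 2)

lemma mem_AU (m : ℕ) (u : ℤ × ℤ) : u ∈ AU m ↔ u.1 = 0 ∧ 0 ≤ u.2 ∧ u.2 < (m:ℤ) + 2 := by
  rw [AU, Finset.mem_product, Finset.mem_singleton, Finset.mem_Ico]

lemma NB_van (m : ℕ) (u : ℤ × ℤ) (p : Pt) (hp : p ∈ Om false) (h0 : u.1 = 0) (hu : u ∉ AU m) :
    NB m (ad p u) = 0 := by
  by_contra h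
  obtain ⟨h1, h2⟩ := Nsp_supp m _ h
  rw [mem_Om_low] at hp
  simp only [ad] at h1 h2
  have k1 : (-1:ℝ) < (u.2:ℝ) := by linarith
  have k2 : (u.2:ℝ) < ((m + 2 : ℤ) : ℝ) := by push_cast; linarith
  have k1' : -1 < u.2 := by exact_mod_cast k1
  have k2' : u.2 < (m:ℤ) + 2 := by exact_mod_cast k2
  apply hu
  rw [mem_AU]
  omega

lemma NB_LI (m : ℕ) : LIon (Om false) (NB m) (AU m) := by
  induction m with
  | zero =>
    intro c hc
    have hA : AU 0 = {((0:ℤ), (0:ℤ)), ((0:ℤ), (1:ℤ))} := by decide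
    rw [hA] at hc ⊢
    have hv : ∀ y : ℝ, 0 < y → y < 1 → c (0, 0) * y + c (0, 1) * (1 - y) = 0 := by
      intro y h0 h1
      have := hc ((y + 1) / 2, y) (by rw [mem_Om_low]; dsimp only; refine ⟨?_, ?_, ?_⟩ <;> linarith)
      rw [Finset.sum_pair (by decide)] at this
      simp only [ad, NB] at this
      push_cast at this
      rw [Nsp0_val1 _ (by linarith) (by linarith), Nsp0_val2 _ (by linarith) (by linarith)] at this
      linarith
    have h1 := hv (1/3) (by norm_num) (by norm_num)
    have h2 := hv (2/3) (by norm_num) (by norm_num)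
    intro u hu
    simp only [Finset.mem_insert, Finset.mem_singleton] at hu
    rcases hu with rfl | rfl <;> linarith
  | succ m ih =>
    rw [← NB_cv]
    refine LI_step (Om false) (Om_open _) (0, 1) (NB m) (NB_cont m) (AU m) (AU (m+1)) ih
      ?_ ?_ ?_ ?_ (fun _ => 0) {0} ?_ ?_ (fun _ => (0, 0)) ?_ ?_ (fun _ _ => 1) ?_ ?_
    · intro u hu; rw [mem_AU] at *; push_cast; omega
    · intro u hu; rw [mem_AU] at *; simp only [Prod.fst_add, Prod.snd_add]; push_cast; omega
    · intro u hu hu' p hp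
      rw [mem_AU] at hu
      exact NB_van m u p hp hu.1 hu'
    · intro u hu hu' p hp
      rw [mem_AU] at hu
      exact NB_van m _ p hp (by simp [hu.1]) hu'
    · simp
    · simp
    · rintro ⟨u1, u2⟩ hu
      rw [mem_AU] at *
      simp only [Prod.mk_sub_mk, Prod.mk.injEq] at *
      push_cast at hu
      omega
    · rintro ⟨u1, u2⟩ hu hu'
      rw [mem_AU] at *
      simp only [Prod.mk_sub_mk] at *
      push_cast at hu
      omega
    · intro p hp k hk
      rw [Finset.mem_singleton] at hk
      subst hk
      rw [NB_cv]
      refine LS_use (0, 1) (by simp) (NB (m+1)) (fun _ => 1) (NB_LS _) (Om false) _ (fun _ => 0)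
        (0, 0) ?_ ?_ p hp
      · intro u hu
        rw [mem_AU] at hu
        simp only [true_iff]
        refine ⟨u.2, ?_⟩
        ext <;> simp [hu.1]
      · rintro u hu ⟨j, hj⟩ p hp
        exact NB_van _ u p hp (by simp [hj]) hu
    · intro d hd k hk
      rw [Finset.mem_singleton] at hk
      subst hk
      have := hd (1/2, 1/4) (by rw [mem_Om_low]; norm_num)
      simpa using this

lemma Nsp_LI (m : ℕ) (d : ℤ → ℝ)
    (h : ∀ y : ℝ, 0 < y → y < 1 → ∑ k ∈ Finset.Ico (0:ℤ) ((m:ℤ) + 2), d k * Nsp m (y + k) = 0) :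
    ∀ k ∈ Finset.Ico (0:ℤ) ((m:ℤ) + 2), d k = 0 := by
  have := NB_LI m (fun u => d u.2) ?_
  · intro k hk
    refine this (0, k) ?_
    rw [mem_AU]
    simpa using hk
  · intro p hp
    rw [mem_Om_low] at hp
    rw [AU, Finset.sum_product, Finset.sum_singleton]
    exact h p.2 (by linarith) (by linarith)

def dl (up : Bool) : ℤ := if up then 1 else 0

def HX (a b c : ℕ) (up : Bool) : Finset (ℤ × ℤ) :=
  ((Finset.Ico (0:ℤ) ((a:ℤ) + c)) ×ˢ (Finset.Ico (0:ℤ) ((b:ℤ) + c))).filter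
    (fun u => dl up - b ≤ u.1 - u.2 ∧ u.1 - u.2 < a + dl up)

lemma mem_HX (a b c : ℕ) (up : Bool) (u : ℤ × ℤ) : u ∈ HX a b c up ↔
    (0 ≤ u.1 ∧ u.1 < (a:ℤ) + c ∧ 0 ≤ u.2 ∧ u.2 < (b:ℤ) + c ∧ dl up - b ≤ u.1 - u.2 ∧
      u.1 - u.2 < a + dl up) := by
  rw [HX, Finset.mem_filter, Finset.mem_product, Finset.mem_Ico, Finset.mem_Ico]
  tauto

lemma dl01 (up : Bool) : 0 ≤ dl up ∧ dl up ≤ 1 := by cases up <;> simp [dl]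

lemma Om_bd (up : Bool) (p : Pt) (hp : p ∈ Om up) : 0 < p.1 ∧ p.1 < 1 ∧ 0 < p.2 ∧ p.2 < 1 ∧
    0 < p.1 - p.2 + dl up ∧ p.1 - p.2 + dl up < 1 := by
  cases up
  · rw [mem_Om_low] at hp
    simp only [dl, Bool.false_eq_true, if_false, Int.cast_zero]
    refine ⟨?_, ?_, ?_, ?_, ?_, ?_⟩ <;> linarith
  · rw [mem_Om_up] at hp
    simp only [dl, if_true, Int.cast_one]
    refine ⟨?_, ?_, ?_, ?_, ?_, ?_⟩ <;> linarith

lemma hex_HX (a b c : ℕ) (up : Bool) (p : Pt) (hp : p ∈ Om up) (u : ℤ × ℤ)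
    (h : hexR a b c (ad p u)) : u ∈ HX a b c up := by
  obtain ⟨p1, p2, p3, p4, p5, p6⟩ := Om_bd up p hp
  simp only [hexR, ad] at h
  obtain ⟨h1, h2, h3, h4, h5, h6⟩ := h
  rw [mem_HX]
  have g1 : (-1:ℤ) < u.1 := by exact_mod_cast (show (-1:ℝ) < u.1 by linarith)
  have g2 : u.1 < (a:ℤ) + c := by exact_mod_cast (show (u.1:ℝ) < a + c by linarith)
  have g3 : (-1:ℤ) < u.2 := by exact_mod_cast (show (-1:ℝ) < u.2 by linarith)
  have g4 : u.2 < (b:ℤ) + c := by exact_mod_cast (show (u.2:ℝ) < b + c by linarith)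
  have g5 : dl up - b - 1 < u.1 - u.2 := by
    exact_mod_cast (show (dl up:ℝ) - b - 1 < u.1 - u.2 by linarith)
  have g6 : u.1 - u.2 < a + dl up := by
    exact_mod_cast (show (u.1:ℝ) - u.2 < a + dl up by linarith)
  omega

structure Good (a b c : ℕ) (B : Pt → ℝ) : Prop where
  cont : Continuous B
  supp : ∀ p, B p ≠ 0 → hexR a b c p
  pp : IsPP B
  li : ∀ up, LIon (Om up) B (HX a b c up)

lemma Good.van {a b c : ℕ} {B : Pt → ℝ} (h : ∀ p, B p ≠ 0 → hexR a b c p) (up : Bool)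
    (u : ℤ × ℤ) (hu : u ∉ HX a b c up) (p : Pt) (hp : p ∈ Om up) : B (ad p u) = 0 := by
  by_contra hne
  exact hu (hex_HX a b c up p hp u (h _ hne))

lemma Good_hat : Good 1 1 1 hat := by
  refine ⟨hat_cont, hat_supp, hat_PP, ?_⟩
  intro up c hc
  cases up
  · have hA : HX 1 1 1 false = {((0:ℤ), (0:ℤ)), ((0:ℤ), (1:ℤ)), ((1:ℤ), (1:ℤ))} := by decide
    rw [hA] at hc ⊢
    have hv : ∀ x y : ℝ, 0 < y → y < x → x < 1 →
        c (0, 0) * y + c (0, 1) * (x - y) + c (1, 1) * (1 - x) = 0 := by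
      intro x y h0 h1 h2
      have := hc (x, y) (by rw [mem_Om_low]; exact ⟨h0, h1, h2⟩)
      rw [Finset.sum_insert (by decide), Finset.sum_pair (by decide)] at this
      simp only [ad] at this
      push_cast at this
      rw [hat_val (x + 0, y + 0) y, hat_val (x + 0, y + 1) (x - y), hat_val (x + 1, y + 1) (1 - x)] at this
      all_goals try dsimp only
      all_goals try linarith
      · right; right; left; ring
      · right; right; right; right; right; ring
      · right; left; ring
    have h1 := hv (1/2) (1/4) (by norm_num) (by norm_num) (by norm_num)
    have h2 := hv (3/4) (1/4) (by norm_num) (by norm_num) (by norm_num)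
    have h3 := hv (3/4) (1/2) (by norm_num) (by norm_num) (by norm_num)
    intro u hu
    simp only [Finset.mem_insert, Finset.mem_singleton] at hu
    rcases hu with rfl | rfl | rfl <;> linarith
  · have hA : HX 1 1 1 true = {((0:ℤ), (0:ℤ)), ((1:ℤ), (0:ℤ)), ((1:ℤ), (1:ℤ))} := by decide
    rw [hA] at hc ⊢
    have hv : ∀ x y : ℝ, 0 < x → x < y → y < 1 →
        c (0, 0) * x + c (1, 0) * (y - x) + c (1, 1) * (1 - y) = 0 := by
      intro x y h0 h1 h2
      have := hc (x, y) (by rw [mem_Om_up]; exact ⟨h0, h1, h2⟩)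
      rw [Finset.sum_insert (by decide), Finset.sum_pair (by decide)] at this
      simp only [ad] at this
      push_cast at this
      rw [hat_val (x + 0, y + 0) x, hat_val (x + 1, y + 0) (y - x), hat_val (x + 1, y + 1) (1 - y)] at this
      all_goals try dsimp only
      all_goals try linarith
      · right; right; right; left; ring
      · right; right; right; right; left; ring
      · left; ring
    have h1 := hv (1/4) (1/2) (by norm_num) (by norm_num) (by norm_num)
    have h2 := hv (1/4) (3/4) (by norm_num) (by norm_num) (by norm_num)
    have h3 := hv (1/2) (3/4) (by norm_num) (by norm_num) (by norm_num)
    intro u hu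
    simp only [Finset.mem_insert, Finset.mem_singleton] at hu
    rcases hu with rfl | rfl | rfl <;> linarith

lemma supp_cv (e : ℤ × ℤ) (B : Pt → ℝ) (p : Pt) (h : cv e B p ≠ 0) :
    ∃ t : ℝ, 0 ≤ t ∧ t ≤ 1 ∧ B (mv p (-t) e) ≠ 0 := by
  by_contra hn
  push Not at hn
  refine h ?_
  unfold cv
  rw [intervalIntegral.integral_congr (g := fun _ => 0)]
  · simp
  · intro t ht
    rw [Set.uIcc_of_le zero_le_one] at ht
    exact hn t ht.1 ht.2

lemma Good_step1 (a b c m : ℕ) (B : Pt → ℝ) (hB : Good a b c B) (hm : m + 2 = b + c)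
    (hLS : LS (1, 0) (cv (1, 0) B) (fun p => Nsp m p.2)) : Good (a + 1) b c (cv (1, 0) B) := by
  have hsupp : ∀ p, cv (1, 0) B p ≠ 0 → hexR (a + 1) b c p := by
    intro p hp
    obtain ⟨t, h0, h1, h⟩ := supp_cv _ _ _ hp
    have := hB.supp _ h
    simp only [hexR, mv] at this ⊢
    push_cast at this ⊢
    obtain ⟨q1, q2, q3, q4, q5, q6⟩ := this
    refine ⟨?_, ?_, ?_, ?_, ?_, ?_⟩ <;> linarith
  refine ⟨cv_cont _ _ hB.cont, hsupp, PP_e1 _ hB.cont hB.pp, ?_⟩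
  intro up
  have hd := dl01 up
  refine LI_step (Om up) (Om_open _) (1, 0) B hB.cont (HX a b c up) (HX (a+1) b c up) (hB.li up)
    ?_ ?_ ?_ ?_ (fun u => u.2) (Finset.Ico 0 ((m:ℤ)+2)) ?_ ?_
    (fun k => (max 0 (k - b + dl up), k)) ?_ ?_ (fun p k => Nsp m (p.2 + k)) ?_ ?_
  · intro u hu; rw [mem_HX] at *; push_cast; omega
  · intro u hu; rw [mem_HX] at *; simp only [Prod.fst_add, Prod.snd_add]; push_cast; omega
  · intro u hu hu' p hp
    exact Good.van hB.supp up u hu' p hp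
  · intro u hu hu' p hp
    exact Good.van hB.supp up _ hu' p hp
  · intro u hu; rw [mem_HX] at hu; rw [Finset.mem_Ico]; push_cast at hu; omega
  · intro u hu; simp
  · rintro ⟨u1, u2⟩ hu
    rw [mem_HX] at *
    simp only [Prod.mk_sub_mk, Prod.mk.injEq, and_true, true_and] at *
    push_cast at hu
    omega
  · rintro ⟨u1, u2⟩ hu hu'
    rw [mem_HX] at *
    simp only [Prod.mk_sub_mk] at *
    push_cast at hu
    omega
  · intro p hp k hk
    have := LS_use (1, 0) (by simp) _ _ hLS (Om up) (HX (a+1) b c up) (fun u => u.2)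
      (0, k) ?_ ?_ p hp
    · exact this
    · intro u hu
      constructor
      · intro h
        dsimp only at h
        refine ⟨u.1, ?_⟩
        ext <;> simp [h]
      · rintro ⟨j, rfl⟩; simp
    · rintro u hu _ p hp
      exact Good.van hsupp up u hu p hp
  · intro d hd
    refine Nsp_LI m d ?_
    intro y h0 h1
    cases up
    · exact hd ((y+1)/2, y) (by rw [mem_Om_low]; dsimp only; refine ⟨?_, ?_, ?_⟩ <;> linarith)
    · exact hd (y/2, y) (by rw [mem_Om_up]; dsimp only; refine ⟨?_, ?_, ?_⟩ <;> linarith)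

lemma Good_step2 (a b c m : ℕ) (B : Pt → ℝ) (hB : Good a b c B) (hm : m + 2 = a + c)
    (hLS : LS (0, 1) (cv (0, 1) B) (fun p => Nsp m p.1)) : Good a (b + 1) c (cv (0, 1) B) := by
  have hsupp : ∀ p, cv (0, 1) B p ≠ 0 → hexR a (b + 1) c p := by
    intro p hp
    obtain ⟨t, h0, h1, h⟩ := supp_cv _ _ _ hp
    have := hB.supp _ h
    simp only [hexR, mv] at this ⊢
    push_cast at this ⊢
    obtain ⟨q1, q2, q3, q4, q5, q6⟩ := this
    refine ⟨?_, ?_, ?_, ?_, ?_, ?_⟩ <;> linarith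
  refine ⟨cv_cont _ _ hB.cont, hsupp, PP_e2 _ hB.cont hB.pp, ?_⟩
  intro up
  have hd := dl01 up
  refine LI_step (Om up) (Om_open _) (0, 1) B hB.cont (HX a b c up) (HX a (b+1) c up) (hB.li up)
    ?_ ?_ ?_ ?_ (fun u => u.1) (Finset.Ico 0 ((m:ℤ)+2)) ?_ ?_
    (fun k => (k, max 0 (k - a - dl up + 1))) ?_ ?_ (fun p k => Nsp m (p.1 + k)) ?_ ?_
  · intro u hu; rw [mem_HX] at *; push_cast; omega
  · intro u hu; rw [mem_HX] at *; simp only [Prod.fst_add, Prod.snd_add]; push_cast; omega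
  · intro u hu hu' p hp
    exact Good.van hB.supp up u hu' p hp
  · intro u hu hu' p hp
    exact Good.van hB.supp up _ hu' p hp
  · intro u hu; rw [mem_HX] at hu; rw [Finset.mem_Ico]; push_cast at hu; omega
  · intro u hu; simp
  · rintro ⟨u1, u2⟩ hu
    rw [mem_HX] at *
    simp only [Prod.mk_sub_mk, Prod.mk.injEq, and_true, true_and] at *
    push_cast at hu
    omega
  · rintro ⟨u1, u2⟩ hu hu'
    rw [mem_HX] at *
    simp only [Prod.mk_sub_mk] at *
    push_cast at hu
    omega
  · intro p hp k hk
    have := LS_use (0, 1) (by simp) _ _ hLS (Om up) (HX a (b+1) c up) (fun u => u.1)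
      (k, 0) ?_ ?_ p hp
    · exact this
    · intro u hu
      constructor
      · intro h
        dsimp only at h
        refine ⟨u.2, ?_⟩
        ext <;> simp [h]
      · rintro ⟨j, rfl⟩; simp
    · rintro u hu _ p hp
      exact Good.van hsupp up u hu p hp
  · intro d hd
    refine Nsp_LI m d ?_
    intro y h0 h1
    cases up
    · exact hd (y, y/2) (by rw [mem_Om_low]; dsimp only; refine ⟨?_, ?_, ?_⟩ <;> linarith)
    · exact hd (y, (y+1)/2) (by rw [mem_Om_up]; dsimp only; refine ⟨?_, ?_, ?_⟩ <;> linarith)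

lemma Good_step3 (a b c m : ℕ) (B : Pt → ℝ) (hB : Good a b c B) (hm : m + 2 = a + b)
    (hLS : LS (1, 1) (cv (1, 1) B) (fun p => Nsp m (p.1 - p.2 + b))) :
    Good a b (c + 1) (cv (1, 1) B) := by
  have hsupp : ∀ p, cv (1, 1) B p ≠ 0 → hexR a b (c + 1) p := by
    intro p hp
    obtain ⟨t, h0, h1, h⟩ := supp_cv _ _ _ hp
    have := hB.supp _ h
    simp only [hexR, mv] at this ⊢
    push_cast at this ⊢
    obtain ⟨q1, q2, q3, q4, q5, q6⟩ := this
    refine ⟨?_, ?_, ?_, ?_, ?_, ?_⟩ <;> linarith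
  refine ⟨cv_cont _ _ hB.cont, hsupp, PP_e3 _ hB.cont hB.pp, ?_⟩
  intro up
  have hd := dl01 up
  refine LI_step (Om up) (Om_open _) (1, 1) B hB.cont (HX a b c up) (HX a b (c+1) up) (hB.li up)
    ?_ ?_ ?_ ?_ (fun u => u.1 - u.2 + b - dl up) (Finset.Ico 0 ((m:ℤ)+2)) ?_ ?_
    (fun k => (max 0 (k - b + dl up), max 0 (k - b + dl up) - (k - b + dl up))) ?_ ?_
    (fun p k => Nsp m (p.1 - p.2 + dl up + k)) ?_ ?_
  · intro u hu; rw [mem_HX] at *; push_cast; omega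
  · intro u hu; rw [mem_HX] at *; simp only [Prod.fst_add, Prod.snd_add]; push_cast; omega
  · intro u hu hu' p hp
    exact Good.van hB.supp up u hu' p hp
  · intro u hu hu' p hp
    exact Good.van hB.supp up _ hu' p hp
  · intro u hu; rw [mem_HX] at hu; rw [Finset.mem_Ico]; push_cast at hu; omega
  · intro u hu; simp
  · rintro ⟨u1, u2⟩ hu
    rw [mem_HX] at *
    simp only [Prod.mk_sub_mk, Prod.mk.injEq, and_true, true_and] at *
    push_cast at hu
    omega
  · rintro ⟨u1, u2⟩ hu hu'
    rw [mem_HX] at *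
    simp only [Prod.mk_sub_mk] at *
    push_cast at hu
    omega
  · intro p hp k hk
    have := LS_use (1, 1) (by simp) _ _ hLS (Om up) (HX a b (c+1) up)
      (fun u => u.1 - u.2 + b - dl up) (k - b + dl up, 0) ?_ ?_ p hp
    · have e1 : k - (b:ℤ) + dl up - 0 + b - dl up = k := by ring
      dsimp only at this
      rw [e1] at this
      rw [this]
      congr 1
      simp only [ad]
      push_cast
      ring
    · intro u hu
      constructor
      · intro h
        dsimp only at h
        refine ⟨u.2, ?_⟩
        ext
        · simp; omega
        · simp
      · rintro ⟨j, rfl⟩; simp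
    · rintro u hu _ p hp
      exact Good.van hsupp up u hu p hp
  · intro d hd
    refine Nsp_LI m d ?_
    intro y h0 h1
    cases up
    · have := hd ((1+y)/2, (1-y)/2) (by rw [mem_Om_low]; dsimp only; refine ⟨?_, ?_, ?_⟩ <;> linarith)
      rw [← this]
      refine Finset.sum_congr rfl fun k _ => ?_
      congr 2
      simp [dl]; ring
    · have := hd (y/2, 1-y/2) (by rw [mem_Om_up]; dsimp only; refine ⟨?_, ?_, ?_⟩ <;> linarith)
      rw [← this]
      refine Finset.sum_congr rfl fun k _ => ?_
      congr 2
      simp [dl]; ring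

lemma cv_a1 (G : ℝ → ℝ) : cv (1, 0) (fun p => G p.2) = fun p => G p.2 := by
  funext p; simp [cv, mv]

lemma cv_a2 (G : ℝ → ℝ) : cv (0, 1) (fun p => G p.1) = fun p => G p.1 := by
  funext p; simp [cv, mv]

lemma cv_a3 (G : ℝ → ℝ) : cv (1, 1) (fun p => G (p.1 - p.2 + 1)) = fun p => G (p.1 - p.2 + 1) := by
  funext p; simp [cv, mv]

lemma cv_b2 (m : ℕ) : cv (0, 1) (fun p => Nsp m p.2) = fun p => Nsp (m + 1) p.2 := by
  funext p; simp [cv, mv, Nsp, sub_eq_add_neg]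

lemma cv_b3 (m : ℕ) : cv (1, 1) (fun p => Nsp m p.2) = fun p => Nsp (m + 1) p.2 := by
  funext p; simp [cv, mv, Nsp, sub_eq_add_neg]

lemma cv_b4 (m : ℕ) : cv (1, 1) (fun p => Nsp m p.1) = fun p => Nsp (m + 1) p.1 := by
  funext p; simp [cv, mv, Nsp, sub_eq_add_neg]

lemma box_000 : boxN 1 1 1 = hat := by
  funext p; rw [boxN]

lemma box_c (c : ℕ) : boxN 1 1 (c + 2) = cv (1, 1) (boxN 1 1 (c + 1)) := by
  funext p; rw [boxN]; simp [cv, mv, sub_eq_add_neg]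

lemma box_b (b c : ℕ) : boxN 1 (b + 2) (c + 1) = cv (0, 1) (boxN 1 (b + 1) (c + 1)) := by
  funext p; rw [boxN]; simp [cv, mv, sub_eq_add_neg]

lemma box_a (a b c : ℕ) :
    boxN (a + 2) (b + 1) (c + 1) = cv (1, 0) (boxN (a + 1) (b + 1) (c + 1)) := by
  funext p; rw [boxN]; simp [cv, mv, sub_eq_add_neg]

lemma main_c (c : ℕ) : Good 1 1 (c + 1) (boxN 1 1 (c + 1)) ∧
    LS (1, 0) (boxN 1 1 (c + 1)) (fun p => Nsp c p.2) ∧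
    LS (0, 1) (boxN 1 1 (c + 1)) (fun p => Nsp c p.1) ∧
    LS (1, 1) (boxN 1 1 (c + 1)) (fun p => Nsp 0 (p.1 - p.2 + 1)) := by
  induction c with
  | zero =>
    rw [box_000]
    exact ⟨Good_hat, hat_LS1, hat_LS2, hat_LS3⟩
  | succ c ih =>
    obtain ⟨h0, h1, h2, h3⟩ := ih
    rw [box_c]
    have k1 := LS_step _ (1, 1) (by simp) _ _ h0.cont h1
    have k2 := LS_step _ (1, 1) (by simp) _ _ h0.cont h2
    have k3 := LS_step _ (1, 1) (by simp) _ _ h0.cont h3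
    rw [cv_b3] at k1
    rw [cv_b4] at k2
    rw [cv_a3 (Nsp 0)] at k3
    refine ⟨?_, k1, k2, k3⟩
    refine Good_step3 1 1 (c + 1) 0 _ h0 (by norm_num) ?_
    rw [Nat.cast_one]
    exact k3

lemma main_b (b c : ℕ) : Good 1 (b + 1) (c + 1) (boxN 1 (b + 1) (c + 1)) ∧
    LS (1, 0) (boxN 1 (b + 1) (c + 1)) (fun p => Nsp (b + c) p.2) ∧
    LS (0, 1) (boxN 1 (b + 1) (c + 1)) (fun p => Nsp c p.1) := by
  induction b with
  | zero =>
    obtain ⟨h0, h1, h2, h3⟩ := main_c c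
    rw [zero_add, zero_add]
    exact ⟨h0, h1, h2⟩
  | succ b ih =>
    obtain ⟨h0, h1, h2⟩ := ih
    rw [box_b]
    have k1 := LS_step _ (0, 1) (by simp) _ _ h0.cont h1
    have k2 := LS_step _ (0, 1) (by simp) _ _ h0.cont h2
    rw [cv_b2, show b + c + 1 = b + 1 + c by ring] at k1
    rw [cv_a2 (Nsp c)] at k2
    refine ⟨?_, k1, k2⟩
    exact Good_step2 1 (b + 1) (c + 1) c _ h0 (by ring) k2

lemma main_a (a b c : ℕ) : Good (a + 1) (b + 1) (c + 1) (boxN (a + 1) (b + 1) (c + 1)) ∧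
    LS (1, 0) (boxN (a + 1) (b + 1) (c + 1)) (fun p => Nsp (b + c) p.2) := by
  induction a with
  | zero =>
    obtain ⟨h0, h1, h2⟩ := main_b b c
    rw [zero_add]
    exact ⟨h0, h1⟩
  | succ a ih =>
    obtain ⟨h0, h1⟩ := ih
    rw [box_a]
    have k1 := LS_step _ (1, 0) (by simp) _ _ h0.cont h1
    rw [cv_a1 (Nsp (b + c))] at k1
    exact ⟨Good_step1 (a + 1) (b + 1) (c + 1) (b + c) _ h0 (by ring) k1, k1⟩

lemma card_HX (a b c : ℕ) (up : Bool) : (HX a b c up).card = a * b + a * c + b * c := by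
  have hd := dl01 up
  induction a with
  | zero =>
    have : HX 0 b c up = ((Finset.Ico (0:ℤ) c) ×ˢ (Finset.Ico (0:ℤ) b)).image
        (fun q => (q.1, q.1 - dl up + 1 + q.2)) := by
      ext ⟨u1, u2⟩
      rw [mem_HX, Finset.mem_image]
      constructor
      · intro h
        push_cast at h
        refine ⟨(u1, u2 - u1 + dl up - 1), ?_, ?_⟩
        · rw [Finset.mem_product, Finset.mem_Ico, Finset.mem_Ico]; dsimp only at h ⊢; omega
        · dsimp only; rw [Prod.mk.injEq]; constructor <;> omega
      · rintro ⟨⟨x, y⟩, hq, h⟩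
        rw [Finset.mem_product, Finset.mem_Ico, Finset.mem_Ico] at hq
        rw [Prod.mk.injEq] at h
        dsimp only at *
        push_cast
        omega
    rw [this, Finset.card_image_of_injective, Finset.card_product]
    · simp; ring
    · rintro ⟨x, y⟩ ⟨x', y'⟩ h
      rw [Prod.mk.injEq] at h ⊢
      dsimp only at h
      omega
  | succ a ih =>
    have : HX (a + 1) b c up = HX a b c up ∪ (Finset.Ico (0:ℤ) ((b:ℤ) + c)).image
        (fun k => (min ((a:ℤ) + c) (k + a + dl up), k)) := by
      ext ⟨u1, u2⟩
      rw [Finset.mem_union, mem_HX, mem_HX, Finset.mem_image]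
      constructor
      · intro h
        push_cast at h
        dsimp only at h ⊢
        by_cases h' : u1 = min ((a:ℤ) + c) (u2 + a + dl up)
        · right
          refine ⟨u2, ?_, ?_⟩
          · rw [Finset.mem_Ico]; omega
          · rw [h']
        · left; omega
      · rintro (h | ⟨k, hk, h⟩)
        · push_cast; try dsimp only at *
          omega
        · rw [Finset.mem_Ico] at hk
          rw [Prod.mk.injEq] at h
          push_cast; try dsimp only at *
          omega
    rw [this, Finset.card_union_of_disjoint, ih, Finset.card_image_of_injective]
    · simp only [Int.card_Ico]
      rw [show ((b:ℤ) + c - 0).toNat = b + c by omega]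
      ring
    · intro x y h
      exact (Prod.mk.inj h).2
    · rw [Finset.disjoint_left]
      rintro ⟨u1, u2⟩ h h'
      rw [mem_HX] at h
      rw [Finset.mem_image] at h'
      obtain ⟨k, hk, h'⟩ := h'
      rw [Prod.mk.injEq] at h'
      dsimp only at h
      omega

lemma poly_tr (q : BPoly) (r : ℤ × ℤ) : ∃ q' : BPoly, ∀ p, evalP q' p = evalP q (ad p r) := by
  refine ⟨MvPolynomial.bind₁ ![X 0 + C (r.1:ℝ), X 1 + C (r.2:ℝ)] q, fun p => ?_⟩
  unfold evalP
  rw [← MvPolynomial.coe_aeval_eq_eval, ← MvPolynomial.coe_aeval_eq_eval]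
  show aeval _ (bind₁ _ q) = aeval _ q
  rw [MvPolynomial.aeval_bind₁]
  congr 2
  funext i
  fin_cases i <;> simp [ad]

lemma ad_mem (v u : ℤ × ℤ) (up : Bool) (p : Pt) :
    p ∈ (Tri.mk v up).toSet ↔ ad p u ∈ (Tri.mk (v + u) up).toSet := by
  cases up
  · rw [mem_low, mem_low]
    simp only [ad, Prod.fst_add, Prod.snd_add]
    push_cast
    constructor <;> rintro ⟨h1, h2, h3⟩ <;> refine ⟨?_, ?_, ?_⟩ <;> linarith
  · rw [mem_up, mem_up]
    simp only [ad, Prod.fst_add, Prod.snd_add]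
    push_cast
    constructor <;> rintro ⟨h1, h2, h3⟩ <;> refine ⟨?_, ?_, ?_⟩ <;> linarith

lemma poly_ext (T : Tri) (q q' : BPoly) (h : ∀ p ∈ T.toSet, evalP q p = evalP q' p) : q = q' := by
  obtain ⟨⟨a, b⟩, up⟩ := T
  cases up
  · refine MvPolynomial.funext_set
      (fun i : Fin 2 => Set.Ioo ((![(a:ℝ) + 1/2, (b:ℝ)] : Fin 2 → ℝ) i)
        ((![(a:ℝ) + 1, (b:ℝ) + 1/2] : Fin 2 → ℝ) i)) ?_ ?_
    · intro i; fin_cases i <;> exact Set.Ioo_infinite (by simp <;> norm_num)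
    · intro x hx
      have h0 := hx 0 (Set.mem_univ _)
      have h1 := hx 1 (Set.mem_univ _)
      simp only [Matrix.cons_val_zero, Matrix.cons_val_one, Set.mem_Ioo] at h0 h1
      have := h (x 0, x 1) (by rw [mem_low]; dsimp only; refine ⟨?_, ?_, ?_⟩ <;> linarith)
      unfold evalP at this
      have e : x = ![x 0, x 1] := by funext i; fin_cases i <;> rfl
      rw [e]; exact this
  · refine MvPolynomial.funext_set
      (fun i : Fin 2 => Set.Ioo ((![(a:ℝ), (b:ℝ) + 1/2] : Fin 2 → ℝ) i)
        ((![(a:ℝ) + 1/2, (b:ℝ) + 1] : Fin 2 → ℝ) i)) ?_ ?_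
    · intro i; fin_cases i <;> exact Set.Ioo_infinite (by simp <;> norm_num)
    · intro x hx
      have h0 := hx 0 (Set.mem_univ _)
      have h1 := hx 1 (Set.mem_univ _)
      simp only [Matrix.cons_val_zero, Matrix.cons_val_one, Set.mem_Ioo] at h0 h1
      have := h (x 0, x 1) (by rw [mem_up]; dsimp only; refine ⟨?_, ?_, ?_⟩ <;> linarith)
      unfold evalP at this
      have e : x = ![x 0, x 1] := by funext i; fin_cases i <;> rfl
      rw [e]; exact this

/-- The local polynomial space `V_n` spanned by the
restrictions to a triangle of the active box spline translates has dimension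
`n₁n₂ + n₁n₃ + n₂n₃`. -/
theorem statement10 (n₁ n₂ n₃ : ℕ) (h₁ : 1 ≤ n₁) (h₂ : 1 ≤ n₂) (h₃ : 1 ≤ n₃)
    (T : Tri) :
    Module.finrank ℝ (Submodule.span ℝ (VSpace n₁ n₂ n₃ T)) =
      n₁ * n₂ + n₁ * n₃ + n₂ * n₃ := by
  have hG : Good n₁ n₂ n₃ (boxN n₁ n₂ n₃) := by
    obtain ⟨a, rfl⟩ := Nat.exists_eq_add_of_le' h₁
    obtain ⟨b, rfl⟩ := Nat.exists_eq_add_of_le' h₂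
    obtain ⟨c, rfl⟩ := Nat.exists_eq_add_of_le' h₃
    exact (main_a a b c).1
  obtain ⟨v, up⟩ := T
  set T : Tri := ⟨v, up⟩ with hT
  set A := HX n₁ n₂ n₃ up with hA
  have htr : ∀ (u : ℤ × ℤ) (p : Pt), trBox n₁ n₂ n₃ (v - u) p = boxN n₁ n₂ n₃ (ad (ad p (-v)) u) := by
    intro u p
    unfold trBox
    congr 1
    simp only [ad, Prod.mk.injEq, Prod.fst_sub, Prod.snd_sub, Prod.fst_neg, Prod.snd_neg]
    push_cast
    constructor <;> ring
  have hOm : ∀ p, p ∈ T.toSet → ad p (-v) ∈ Om up := by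
    intro p hp
    have := (ad_mem v (-v) up p).1 hp
    rw [add_neg_cancel] at this
    exact this
  have hOm' : ∀ p, p ∈ Om up → ad p v ∈ T.toSet := by
    intro p hp
    have := (ad_mem (0, 0) v up p).1 hp
    rw [show ((0:ℤ), (0:ℤ)) + v = v from zero_add v] at this
    exact this
  have hadad : ∀ p : Pt, ad (ad p v) (-v) = p := by
    intro p
    simp [ad]
  have hQ : ∀ u : ℤ × ℤ, ∃ q : BPoly, ∀ p ∈ T.toSet, evalP q p = trBox n₁ n₂ n₃ (v - u) p := by
    intro u
    obtain ⟨q, hq⟩ := hG.pp ⟨u, up⟩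
    obtain ⟨q', hq'⟩ := poly_tr q (u - v)
    refine ⟨q', fun p hp => ?_⟩
    have hm := (ad_mem v (u - v) up p).1 hp
    rw [add_sub_cancel] at hm
    rw [hq', ← hq _ hm, htr]
    congr 1
    simp only [ad, Prod.mk.injEq, Prod.fst_sub, Prod.snd_sub, Prod.fst_neg, Prod.snd_neg]
    push_cast
    constructor <;> ring
  choose Q hQ using hQ
  have evsum : ∀ (s : Finset (ℤ × ℤ)) (d : ℤ × ℤ → ℝ) (p : Pt),
      evalP (∑ u ∈ s, d u • Q u) p = ∑ u ∈ s, d u * evalP (Q u) p := by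
    intro s d p
    simp [evalP, map_sum, MvPolynomial.smul_eval]
  have hLIQ : ∀ d : ℤ × ℤ → ℝ, ∑ u ∈ A, d u • Q u = 0 → ∀ u ∈ A, d u = 0 := by
    intro d hd
    refine hG.li up d ?_
    intro p hp
    have := evsum A d (ad p v)
    rw [hd] at this
    have h0 : evalP 0 (ad p v) = 0 := by simp [evalP]
    rw [h0] at this
    rw [this]
    refine Finset.sum_congr rfl fun u _ => ?_
    rw [hQ u _ (hOm' p hp), htr, hadad]
  have hact : ∀ u, v - u ∈ activeSet n₁ n₂ n₃ T ↔ u ∈ A := by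
    intro u
    constructor
    · intro h
      by_contra hu
      refine h fun p hp => ?_
      rw [htr]
      exact Good.van hG.supp up u hu _ (hOm p hp)
    · intro hu h
      have hz : Q u = 0 := by
        refine poly_ext T _ _ fun p hp => ?_
        rw [hQ u p hp, h p hp]
        simp [evalP]
      have := hLIQ (fun w => if w = u then 1 else 0) (by simp [hz]) u hu
      simp at this
  have hLI : LinearIndependent ℝ (fun u : A => Q u) := by
    rw [Fintype.linearIndependent_iff]
    intro g hg i
    have := hLIQ (fun w => if h : w ∈ A then g ⟨w, h⟩ else 0) (by
      rw [← hg, ← Finset.sum_coe_sort]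
      refine Finset.sum_congr rfl fun u _ => ?_
      simp) i i.2
    simpa using this
  have hspan : Submodule.span ℝ (VSpace n₁ n₂ n₃ T) =
      Submodule.span ℝ (Set.range (fun u : A => Q u)) := by
    apply le_antisymm
    · rw [Submodule.span_le]
      rintro q ⟨c, hc, hq⟩
      have : q = ∑ w ∈ c.support, c w • Q (v - w) := by
        refine poly_ext T _ _ fun p hp => ?_
        rw [hq p hp]
        have : evalP (∑ w ∈ c.support, c w • Q (v - w)) p
            = ∑ w ∈ c.support, c w * evalP (Q (v - w)) p := by
          simp [evalP, map_sum, MvPolynomial.smul_eval]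
        rw [this, Finsupp.sum]
        refine Finset.sum_congr rfl fun w _ => ?_
        rw [hQ _ p hp, sub_sub_cancel]
      rw [this]
      refine Submodule.sum_mem _ fun w hw => Submodule.smul_mem _ _ (Submodule.subset_span ?_)
      have hm : v - w ∈ A := by
        rw [← hact, sub_sub_cancel]
        exact hc hw
      exact ⟨⟨v - w, hm⟩, rfl⟩
    · rw [Submodule.span_le]
      rintro _ ⟨u, rfl⟩
      refine Submodule.subset_span ⟨Finsupp.single (v - u) 1, ?_, ?_⟩
      · intro w hw
        have : w = v - u := by
          simpa using hw
        rw [this, hact]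
        exact u.2
      · intro p hp
        rw [hQ _ p hp]
        simp
  rw [hspan, finrank_span_eq_card hLI, Fintype.card_coe, hA, card_HX]

end
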